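/- For the EPR4 channel h(D) = 1 + D − D² − D³ and any 0 ≤ ε ≤ 1/2, the infimum over all error events (eᵃ, eᵇ) of d²_ML(eᵃ,eᵇ) = ((1+ε)²/2)·‖e⁺∗h‖² + ((1−ε)²/2)·‖e⁻∗h‖² is attained and equals 16(1+ε²) if 0 ≤ ε ≤ 2−√3, and equals 32(1−ε)² if 2−√3 ≤ ε ≤ 1/2. -/

import Mathlib

/-!
With `c = (eᵃ + eᵇ)/2` and `d = (eᵃ - eᵇ)/2`, two integer sequences, everything follows from one
fact (`four_le_sum_sq`): a nonzero finitely supported integer sequence `f` satisfies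
`‖f∗h‖² ≥ 4`. Indeed `h(D) = (1 - D)(1 + D)²`, so `g = f∗h` satisfies the three moment identities
`∑ g_k = ∑ (-1)^k g_k = ∑ k (-1)^k g_k = 0`. These rule out a support of one or two elements, so
`∑ g_k² ≥ 3`, while `∑ g_k² ≡ ∑ g_k = 0` modulo 2.

If `e⁺` and `e⁻` are both nonzero, each has energy at least `2² · 4 = 16`, which gives
`d² ≥ 16(1 + ε²)`. If one of them vanishes, the other is four times an integer sequence and has
energy at least `4² · 4 = 64`, which gives `d² ≥ 32(1 - ε)²`. The two bounds are attained by
`(2δ, 0)` and `(2δ, -2δ)`, with `δ` the unit impulse, and they cross at the root `2 - √3` of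
`ε² - 4ε + 1`.
-/

/-- The filtered error sequence `(e∗h)_k = Σ_{i=0}^{ν} h_i e_{k−i}`. -/
noncomputable def filt (ν : ℕ) (h : ℕ → ℝ) (e : ℤ → ℝ) (k : ℤ) : ℝ :=
  ∑ i ∈ Finset.range (ν + 1), h i * e (k - i)

/-- The energy `‖e∗h‖² = Σ_{k∈ℤ} (e∗h)_k²`. -/
noncomputable def energy (ν : ℕ) (h : ℕ → ℝ) (e : ℤ → ℝ) : ℝ :=
  ∑ᶠ k : ℤ, (filt ν h e k) ^ 2

/-- A finitely supported sequence taking values in {−2, 0, 2}. -/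
def Admissible (e : ℤ → ℝ) : Prop :=
  (Function.support e).Finite ∧ ∀ k, e k ∈ ({-2, 0, 2} : Set ℝ)

/-- The EPR4 channel `h(D) = 1 + D − D² − D³`. -/
noncomputable def epr4 : ℕ → ℝ := fun i => if i = 0 then 1 else if i = 1 then 1 else if i = 2 then -1 else if i = 3 then -1 else 0

/-! ### The integer sequence `f∗h` and its moments -/

/-- The integer sequence `f∗h` for the EPR4 channel `h`. -/
def conv4 (f : ℤ → ℤ) (k : ℤ) : ℤ := f k + f (k - 1) - f (k - 2) - f (k - 3)

lemma filt_epr4 (e : ℤ → ℝ) (k : ℤ) :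
    filt 3 epr4 e k = e k + e (k - 1) - e (k - 2) - e (k - 3) := by
  simp [filt, epr4, Finset.sum_range_succ]
  ring

lemma finite_support_shift {f : ℤ → ℤ} (hf : f.support.Finite) (w : ℤ → ℤ) (i : ℤ) :
    (Function.support fun k => w k * f (k - i)).Finite := by
  refine (hf.image (fun k => k + i)).subset ?_
  intro k hk
  exact ⟨k - i, fun h => hk (by simp [h]), by simp⟩

lemma finite_support_conv4 {f : ℤ → ℤ} (hf : f.support.Finite) :
    (conv4 f).support.Finite := by
  have H := fun i => finite_support_shift hf 1 i
  refine ((((H 0).union (H 1)).union (H 2)).union (H 3)).subset ?_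
  intro k hk
  by_contra hn
  simp at hn
  exact hk (by simp [conv4, hn])

lemma finsum_shift (f w : ℤ → ℤ) (i : ℤ) :
    ∑ᶠ k, w k * f (k - i) = ∑ᶠ k, w (k + i) * f k := by
  rw [← finsum_comp_equiv (Equiv.addRight i)]
  simp

/-- A weight `w` annihilated by the adjoint of the channel has zero pairing with `f∗h`. -/
lemma finsum_weight_conv4 {f : ℤ → ℤ} (hf : f.support.Finite) (w : ℤ → ℤ)
    (hw : ∀ j, w j + w (j + 1) - w (j + 2) - w (j + 3) = 0) :
    ∑ᶠ k, w k * conv4 f k = 0 := by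
  have H := fun i => finite_support_shift hf w i
  have H' : ∀ i, (Function.support fun k => w (k + i) * f k).Finite := fun i =>
    hf.subset fun k hk h => hk (by simp [h])
  have H0 := H 0
  have H0' := H' 0
  simp only [sub_zero, add_zero] at H0 H0'
  have e : (fun k => w k * conv4 f k) = fun k =>
      (w k * f k + w k * f (k - 1)) - (w k * f (k - 2) + w k * f (k - 3)) := by
    funext k
    simp only [conv4]
    ring
  rw [e, finsum_sub_distrib ((H0.union (H 1)).subset (Function.support_add _ _))
    (((H 2).union (H 3)).subset (Function.support_add _ _)), finsum_add_distrib H0 (H 1),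
    finsum_add_distrib (H 2) (H 3), finsum_shift, finsum_shift, finsum_shift,
    ← finsum_add_distrib H0' (H' 1), ← finsum_add_distrib (H' 2) (H' 3),
    ← finsum_sub_distrib ((H0'.union (H' 1)).subset (Function.support_add _ _))
    (((H' 2).union (H' 3)).subset (Function.support_add _ _))]
  convert finsum_zero with k
  linear_combination f k * hw k

/-- The first nonzero entry of `f` survives in `f∗h`. -/
lemma conv4_ne_zero {f : ℤ → ℤ} (hf : f.support.Finite) (h0 : f ≠ 0) : conv4 f ≠ 0 := by
  obtain ⟨m, hm, hmin⟩ := hf.exists_minimal (Function.support_nonempty_iff.2 h0)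
  have hz : ∀ j, j < m → f j = 0 := fun j hj => by
    by_contra hn
    exact absurd (hmin hn hj.le) (not_le.2 hj)
  intro h
  have := congrFun h m
  simp only [conv4, hz (m - 1) (by lia), hz (m - 2) (by lia), hz (m - 3) (by lia)] at this
  exact hm (by simpa using this)

/-- The support of `g = f∗h` has at least three elements by the moment identities, and `∑ g_k²` is
even because `∑ g_k = 0`. -/
lemma four_le_sum_sq {f : ℤ → ℤ} (hf : f.support.Finite) (h0 : f ≠ 0) :
    4 ≤ ∑ᶠ k, conv4 f k ^ 2 := by
  have hg := finite_support_conv4 hf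
  have hne := conv4_ne_zero hf h0
  set s := hg.toFinset with hs
  have hmem : ∀ k, k ∈ s ↔ conv4 f k ≠ 0 := by simp [hs]
  have conv : ∀ w : ℤ → ℤ, ∑ᶠ k, w k * conv4 f k = ∑ k ∈ s, w k * conv4 f k := fun w =>
    finsum_eq_sum_of_support_subset _ fun k hk => (hmem k).2 fun h => hk (by simp [h])
  have step : ∀ n : ℤ, ((n + 1).negOnePow : ℤ) = -(n.negOnePow : ℤ) := fun n => by
    simp [Int.negOnePow_succ]
  have step2 : ∀ n : ℤ, ((n + 2).negOnePow : ℤ) = (n.negOnePow : ℤ) := fun n => by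
    rw [show n + 2 = n + 1 + 1 by ring, step, step, neg_neg]
  have step3 : ∀ n : ℤ, ((n + 3).negOnePow : ℤ) = -(n.negOnePow : ℤ) := fun n => by
    rw [show n + 3 = n + 2 + 1 by ring, step, step2]
  -- the moment identities coming from `h(1) = h(-1) = h'(-1) = 0`
  have m1 := finsum_weight_conv4 hf (fun _ => 1) (by simp)
  have m2 := finsum_weight_conv4 hf (fun k => (k.negOnePow : ℤ))
    (fun j => by simp only [step, step2, step3]; ring)
  have m3 := finsum_weight_conv4 hf (fun k => k * (k.negOnePow : ℤ))
    (fun j => by simp only [step, step2, step3]; ring)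
  rw [conv] at m1 m2 m3
  have hsq : ∑ᶠ k, conv4 f k ^ 2 = ∑ k ∈ s, conv4 f k ^ 2 :=
    finsum_eq_sum_of_support_subset _ fun k hk => (hmem k).2 fun h => hk (by simp [h])
  rw [hsq]
  have heven : (2 : ℤ) ∣ ∑ k ∈ s, conv4 f k ^ 2 := by
    have : ∑ k ∈ s, conv4 f k ^ 2 = ∑ k ∈ s, (conv4 f k ^ 2 - 1 * conv4 f k) := by
      rw [Finset.sum_sub_distrib, m1, sub_zero]
    rw [this]
    refine Finset.dvd_sum fun k _ => ?_
    have := (Int.even_mul_pred_self (conv4 f k)).two_dvd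
    convert this using 1
    ring
  have hcard : 3 ≤ s.card := by
    by_contra hlt
    have : s.card = 0 ∨ s.card = 1 ∨ s.card = 2 := by lia
    rcases this with h | h | h
    · refine hne (funext fun k => ?_)
      by_contra hk
      rw [Finset.card_eq_zero] at h
      simpa [h] using (hmem k).2 hk
    · obtain ⟨i, hi⟩ := Finset.card_eq_one.1 h
      have := (hmem i).1 (by simp [hi])
      simp [hi] at m1
      exact this m1
    · obtain ⟨i, j, hij, hi⟩ := Finset.card_eq_two.1 h
      have hgi := (hmem i).1 (by simp [hi])
      rw [hi, Finset.sum_pair hij] at m1 m2 m3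
      -- `g_j = -g_i` forces equal signs at `i` and `j`, and then the last identity forces `i = j`
      have hj : conv4 f j = -conv4 f i := by linarith
      rw [hj] at m2 m3
      have hsgn : (i.negOnePow : ℤ) = (j.negOnePow : ℤ) := by
        refine mul_right_cancel₀ hgi ?_
        linarith
      have hu : (j.negOnePow : ℤ) ≠ 0 := Units.ne_zero _
      simp only [hsgn] at m3
      have : (i - j) * ((j.negOnePow : ℤ) * conv4 f i) = 0 := by linarith
      rcases mul_eq_zero.1 this with h | h
      · exact hij (by lia)
      · exact (mul_ne_zero hu hgi) h
  have hge : (s.card : ℤ) ≤ ∑ k ∈ s, conv4 f k ^ 2 := by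
    have := Finset.card_nsmul_le_sum s (fun k => conv4 f k ^ 2) 1 fun k hk =>
      Int.add_one_le_iff.2 (sq_pos_iff.2 ((hmem k).1 hk))
    simpa using this
  lia

/-! ### Energies of error sequences -/

lemma energy_eq {f : ℤ → ℤ} (hf : f.support.Finite) (c : ℝ) {e : ℤ → ℝ}
    (he : ∀ k, e k = c * f k) :
    energy 3 epr4 e = c ^ 2 * ((∑ᶠ k, conv4 f k ^ 2 : ℤ) : ℝ) := by
  have hfin : (Function.support fun k => conv4 f k ^ 2).Finite :=
    (finite_support_conv4 hf).subset fun k hk h => hk (by simp [h])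
  have := (Int.castAddHom ℝ).map_finsum hfin
  simp only [Int.coe_castAddHom] at this
  rw [energy, this, mul_finsum]
  · refine finsum_congr fun k => ?_
    rw [filt_epr4]
    simp only [he, conv4]
    push_cast
    ring

lemma le_energy {f : ℤ → ℤ} (hf : f.support.Finite) (h0 : f ≠ 0) (c : ℝ) {e : ℤ → ℝ}
    (he : ∀ k, e k = c * f k) : 4 * c ^ 2 ≤ energy 3 epr4 e := by
  rw [energy_eq hf c he]
  have : (4 : ℝ) ≤ ((∑ᶠ k, conv4 f k ^ 2 : ℤ) : ℝ) := by exact_mod_cast four_le_sum_sq hf h0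
  nlinarith [sq_nonneg c]

lemma energy_nonneg (e : ℤ → ℝ) : 0 ≤ energy 3 epr4 e :=
  finsum_nonneg fun _ => sq_nonneg _

lemma energy_impulse (c : ℝ) : energy 3 epr4 (Pi.single 0 c) = 4 * c ^ 2 := by
  have hsub : (Function.support fun k => filt 3 epr4 (Pi.single 0 c) k ^ 2) ⊆
      (({0, 1, 2, 3} : Finset ℤ) : Set ℤ) := by
    intro k hk
    by_contra hn
    simp at hn
    refine hk ?_
    have h1 : k - 1 ≠ 0 := by lia
    have h2 : k - 2 ≠ 0 := by lia
    have h3 : k - 3 ≠ 0 := by lia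
    simp [filt_epr4, hn, h1, h2, h3]
  rw [energy, finsum_eq_sum_of_support_subset _ hsub]
  simp [filt_epr4, Pi.single_apply]
  ring

lemma Admissible.exists_int {e : ℤ → ℝ} (h : Admissible e) :
    ∃ f : ℤ → ℤ, f.support.Finite ∧ ∀ k, e k = 2 * f k := by
  have : ∀ k, ∃ n : ℤ, e k = 2 * n := fun k => by
    rcases h.2 k with h | h | h
    · exact ⟨-1, by rw [h]; norm_num⟩
    · exact ⟨0, by rw [h]; norm_num⟩
    · exact ⟨1, by rw [h]; norm_num⟩
  choose f hf using this
  exact ⟨f, h.1.subset fun k hk h => hk (by simpa [h] using (hf k).symm), hf⟩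

lemma admissible_impulse {c : ℝ} (hc : c ∈ ({-2, 0, 2} : Set ℝ)) :
    Admissible (Pi.single 0 c) := by
  refine ⟨(Set.finite_singleton (0 : ℤ)).subset Pi.support_single_subset, fun k => ?_⟩
  by_cases hk : k = 0
  · subst hk
    simpa using hc
  · simp [hk]

/-! ### The distance bound -/

/-- Either both `e⁺` and `e⁻` have energy at least 16, or one of them has energy at least 64. -/
lemma energy_cases {ea eb : ℤ → ℝ} (ha : Admissible ea) (hb : Admissible eb)
    (hab : ¬ (ea = 0 ∧ eb = 0)) :
    (16 ≤ energy 3 epr4 (fun k => ea k + eb k) ∧ 16 ≤ energy 3 epr4 (fun k => ea k - eb k)) ∨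
      64 ≤ energy 3 epr4 (fun k => ea k + eb k) ∨ 64 ≤ energy 3 epr4 (fun k => ea k - eb k) := by
  obtain ⟨a, haf, ha⟩ := ha.exists_int
  obtain ⟨b, hbf, hb⟩ := hb.exists_int
  have hne : a = 0 → b = 0 → False := fun h1 h2 =>
    hab ⟨funext fun k => by simp [ha, h1], funext fun k => by simp [hb, h2]⟩
  by_cases hp : a + b = 0
  · have hba : b = -a := by linear_combination hp
    right; right
    have := le_energy (e := fun k => ea k - eb k) haf
      (fun h => hne h (by simp [hba, h])) 4 (fun k => by simp [ha, hb, hba]; ring)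
    linarith
  by_cases hm : a - b = 0
  · have hba : b = a := by linear_combination -hm
    right; left
    have := le_energy (e := fun k => ea k + eb k) haf
      (fun h => hne h (by simp [hba, h])) 4 (fun k => by simp [ha, hb, hba]; ring)
    linarith
  left
  have h1 := le_energy (e := fun k => ea k + eb k)
    ((haf.union hbf).subset (Function.support_add _ _)) hp 2
    (fun k => by simp [ha, hb]; ring)
  have h2 := le_energy (e := fun k => ea k - eb k)
    ((haf.union hbf).subset (Function.support_sub _ _)) hm 2
    (fun k => by simp [ha, hb]; ring)
  constructor <;> linarith

/-- Any `L` below both candidate values is a lower bound for the distance. -/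
lemma le_distance {ε L : ℝ} (hε0 : 0 ≤ ε) (h1 : L ≤ 16 * (1 + ε ^ 2))
    (h2 : L ≤ 32 * (1 - ε) ^ 2) {ea eb : ℤ → ℝ} (ha : Admissible ea) (hb : Admissible eb)
    (hab : ¬ (ea = 0 ∧ eb = 0)) :
    L ≤ (1 + ε)^2 / 2 * energy 3 epr4 (fun k => ea k + eb k)
      + (1 - ε)^2 / 2 * energy 3 epr4 (fun k => ea k - eb k) := by
  have hP := energy_nonneg (fun k => ea k + eb k)
  have hM := energy_nonneg (fun k => ea k - eb k)
  have hc := energy_cases ha hb hab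
  generalize energy 3 epr4 (fun k => ea k + eb k) = P at *
  generalize energy 3 epr4 (fun k => ea k - eb k) = M at *
  have hp := sq_nonneg (1 + ε)
  have hm := sq_nonneg (1 - ε)
  rcases hc with ⟨hP', hM'⟩ | hP' | hM'
  · linarith [mul_le_mul_of_nonneg_left hP' hp, mul_le_mul_of_nonneg_left hM' hm]
  · linarith [mul_le_mul_of_nonneg_left hP' hp, mul_nonneg hm hM]
  · linarith [mul_le_mul_of_nonneg_left hM' hm, mul_nonneg hp hP]

theorem ml_min_distance_epr4 (ε : ℝ) (hε0 : 0 ≤ ε) (hε : ε ≤ 1/2) :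
    (ε ≤ 2 - Real.sqrt 3 →
      IsLeast {x | ∃ ea eb : ℤ → ℝ, Admissible ea ∧ Admissible eb ∧ ¬ (ea = 0 ∧ eb = 0) ∧
          x = (1 + ε)^2 / 2 * energy 3 epr4 (fun k => ea k + eb k)
              + (1 - ε)^2 / 2 * energy 3 epr4 (fun k => ea k - eb k)}
        (16 * (1 + ε^2))) ∧
    (2 - Real.sqrt 3 ≤ ε →
      IsLeast {x | ∃ ea eb : ℤ → ℝ, Admissible ea ∧ Admissible eb ∧ ¬ (ea = 0 ∧ eb = 0) ∧
          x = (1 + ε)^2 / 2 * energy 3 epr4 (fun k => ea k + eb k)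
              + (1 - ε)^2 / 2 * energy 3 epr4 (fun k => ea k - eb k)}
        (32 * (1 - ε)^2)) := by
  have h3 : Real.sqrt 3 ^ 2 = 3 := Real.sq_sqrt (by norm_num)
  have h3n := Real.sqrt_nonneg 3
  refine ⟨fun hle => ⟨?_, ?_⟩, fun hge => ⟨?_, ?_⟩⟩
  · refine ⟨Pi.single 0 2, 0, admissible_impulse (c := 2) (by simp), ⟨by simp, by simp⟩, ?_, ?_⟩
    · rintro ⟨h, -⟩
      simpa using congrFun h 0
    · have e1 : (fun k => (Pi.single 0 2 : ℤ → ℝ) k + (0 : ℤ → ℝ) k) = Pi.single 0 2 := by simp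
      have e2 : (fun k => (Pi.single 0 2 : ℤ → ℝ) k - (0 : ℤ → ℝ) k) = Pi.single 0 2 := by simp
      rw [e1, e2, energy_impulse]
      ring
  · rintro x ⟨ea, eb, ha, hb, hab, rfl⟩
    refine le_distance hε0 le_rfl ?_ ha hb hab
    -- `ε² - 4ε + 1 = (2 - √3 - ε)(2 + √3 - ε)`, and the second factor is positive
    nlinarith [mul_nonneg (sub_nonneg.2 hle) (show 0 ≤ 2 + Real.sqrt 3 - ε by linarith)]
  · refine ⟨Pi.single 0 2, Pi.single 0 (-2), admissible_impulse (c := 2) (by simp),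
      admissible_impulse (c := -2) (by simp), ?_, ?_⟩
    · rintro ⟨h, -⟩
      simpa using congrFun h 0
    · have e1 : (fun k => (Pi.single 0 2 : ℤ → ℝ) k + (Pi.single 0 (-2) : ℤ → ℝ) k) =
          Pi.single 0 0 := by
        funext k
        by_cases hk : k = 0 <;> simp [hk]
      have e2 : (fun k => (Pi.single 0 2 : ℤ → ℝ) k - (Pi.single 0 (-2) : ℤ → ℝ) k) =
          Pi.single 0 4 := by
        funext k
        by_cases hk : k = 0 <;> simp [hk]
        norm_num
      rw [e1, e2, energy_impulse, energy_impulse]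
      ring
  · rintro x ⟨ea, eb, ha, hb, hab, rfl⟩
    refine le_distance hε0 ?_ le_rfl ha hb hab
    nlinarith [mul_nonneg (sub_nonneg.2 hge) (show 0 ≤ 2 + Real.sqrt 3 - ε by linarith)]
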